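/- arXiv:2311.01032 — 7 statements merged into one kernel-verified Lean document; each statement's English description precedes it below -/
import Mathlib

section
/- Orthogonality of consensus-propagation messages along a path (four nodes): let l, l', l̃', l̃ be four pairwise-distinct vertices of the tree G such that l' is adjacent to l, l̃' is adjacent to l̃, and the unique path in G from l to l̃ visits l, l', …, l̃', l̃ in this order. Then for all rounds i' ≤ i and every inner iteration j ∈ {0,…,J}: ⟨P_{i,j}[l→l'], P_{i',j}[l̃→l̃']⟩ = 0. -/
open MeasureTheory SimpleGraph
open scoped RealInnerProductSpace

/-- in a tree each edge lies on every walk joining its ends -/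
theorem aux_bridge {L : Type*} {G : SimpleGraph L} (hG : G.IsTree) {a b : L} (h : G.Adj a b)
    (p : G.Walk a b) : s(a, b) ∈ p.edges := by
  have h3 := isAcyclic_iff_forall_adj_isBridge.mp hG.IsAcyclic h
  exact (isBridge_iff_forall_walk_mem_edges.mp h3) p

/-- vertices reachable from `l` without visiting `l'` -/
def auxS {L : Type*} (G : SimpleGraph L) (l l' : L) : Set L :=
  {x | ∃ p : G.Walk l x, l' ∉ p.support}

theorem auxS_step {L : Type*} [DecidableEq L] {G : SimpleGraph L} (hG : G.IsTree) {l l' m : L}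
    (h : G.Adj l l') (hm : G.Adj l m) (hne : m ≠ l') : auxS G m l ⊆ auxS G l l' := by
  rintro x ⟨p, hp⟩
  refine ⟨Walk.cons hm p, ?_⟩
  intro hmem
  rw [Walk.support_cons, List.mem_cons] at hmem
  rcases hmem with hmem | hmem
  · exact h.ne hmem.symm
  · have hb := aux_bridge hG h (Walk.cons hm (p.takeUntil l' hmem))
    rw [Walk.edges_cons, List.mem_cons] at hb
    rcases hb with hb | hb
    · rw [Sym2.congr_right] at hb
      exact hne hb.symm
    · exact hp (p.support_takeUntil_subset hmem (Walk.fst_mem_support_of_mem_edges _ hb))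

theorem auxS_disj {L : Type*} [DecidableEq L] {G : SimpleGraph L} (hG : G.IsTree)
    {l l' lt' lt : L} (h1 : G.Adj l l') (h2 : G.Adj lt' lt) (q : G.Walk l' lt')
    (hq : (SimpleGraph.Walk.cons h1 (q.concat h2)).IsPath) {x : L}
    (hx : x ∈ auxS G l l') (hx' : x ∈ auxS G lt lt') : False := by
  obtain ⟨p, hp⟩ := hx
  obtain ⟨r, hr⟩ := hx'
  rw [Walk.cons_isPath_iff] at hq
  obtain ⟨hq1, hl⟩ := hq
  have hlt : lt ∉ q.support := by
    have := hq1.support_nodup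
    rw [Walk.support_concat] at this
    intro hc
    simp [List.nodup_append, hc] at this
    exact this.2 _ hc rfl
  by_cases hc : l' ∈ r.support
  · have hb := aux_bridge hG h2.symm ((r.takeUntil l' hc).append q)
    rw [Walk.edges_append, List.mem_append] at hb
    rcases hb with hb | hb
    · exact hr (r.support_takeUntil_subset hc (Walk.snd_mem_support_of_mem_edges _ hb))
    · exact hlt (Walk.fst_mem_support_of_mem_edges _ hb)
  · have hb := aux_bridge hG h1.symm (((q.concat h2).append r).append p.reverse)
    rw [Walk.edges_append, Walk.edges_append, List.mem_append, List.mem_append,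
      Walk.edges_reverse, List.mem_reverse] at hb
    rcases hb with (hb | hb) | hb
    · exact hl (Walk.snd_mem_support_of_mem_edges _ hb)
    · exact hc (Walk.fst_mem_support_of_mem_edges _ hb)
    · exact hp (Walk.fst_mem_support_of_mem_edges _ hb)

/-- Orthogonality of consensus-propagation messages along a path
(four nodes): if `l, l', lt', lt` are pairwise distinct vertices of a tree `G` with
`l ~ l'`, `lt' ~ lt`, and the unique path from `l` to `lt` visits `l, l', …, lt', lt`
in this order, then for all rounds `i' ≤ i` and inner iterations `j ≤ J`,
`⟪P_{i,j}[l→l'], P_{i',j}[lt→lt']⟫ = 0`. -/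
theorem consensus_messages_orthogonal_path_four
    {𝓛 : Type*} [Fintype 𝓛] [DecidableEq 𝓛] (G : SimpleGraph 𝓛) [DecidableRel G.Adj]
    (hG : G.IsTree)
    {V : Type*} [NormedAddCommGroup V] [InnerProductSpace ℝ V]
    (u : ℕ → 𝓛 → V)
    (hu : ∀ i i' : ℕ, ∀ l l' : 𝓛, l ≠ l' → ⟪u i l, u i' l'⟫ = 0)
    (J : ℕ) (P : ℕ → ℕ → 𝓛 → 𝓛 → V)
    (hP00 : ∀ l l' : 𝓛, G.Adj l l' → P 0 0 l l' = 0)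
    (hPinit : ∀ (i : ℕ) (l l' : 𝓛), G.Adj l l' → P (i + 1) 0 l l' = P i J l l')
    (hPstep : ∀ (i j : ℕ), j < J → ∀ l l' : 𝓛, G.Adj l l' →
      P i (j + 1) l l' = u i l + ∑ l'' ∈ (G.neighborFinset l).erase l', P i j l'' l)
    (l l' lt' lt : 𝓛)
    (hdistinct : List.Pairwise (· ≠ ·) [l, l', lt', lt])
    (h1 : G.Adj l l') (h2 : G.Adj lt' lt)
    (q : G.Walk l' lt')
    (hq : (SimpleGraph.Walk.cons h1 (q.concat h2)).IsPath)
    (i i' : ℕ) (hii : i' ≤ i) (j : ℕ) (hj : j ≤ J) :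
    ⟪P i j l l', P i' j lt lt'⟫ = 0 := by
  have key : ∀ i j, j ≤ J → ∀ a b : 𝓛, G.Adj a b →
      P i j a b ∈ Submodule.span ℝ {v | ∃ k, ∃ x ∈ auxS G a b, v = u k x} := by
    intro i
    induction i with
    | zero =>
      intro j
      induction j with
      | zero => intro _ a b h; rw [hP00 a b h]; exact Submodule.zero_mem _
      | succ j ih =>
        intro hj a b h
        rw [hPstep _ j hj a b h]
        refine Submodule.add_mem _ (Submodule.subset_span ⟨_, a, ⟨Walk.nil, ?_⟩, rfl⟩)
          (Submodule.sum_mem _ fun c hc => ?_)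
        · simpa using h.ne'
        · rw [Finset.mem_erase, mem_neighborFinset] at hc
          refine Submodule.span_mono ?_ (ih (by omega) c a hc.2.symm)
          rintro v ⟨k, x, hx, rfl⟩
          exact ⟨k, x, auxS_step hG h hc.2 hc.1 hx, rfl⟩
    | succ i ihi =>
      intro j
      induction j with
      | zero => intro _ a b h; rw [hPinit i a b h]; exact ihi J le_rfl a b h
      | succ j ih =>
        intro hj a b h
        rw [hPstep _ j hj a b h]
        refine Submodule.add_mem _ (Submodule.subset_span ⟨_, a, ⟨Walk.nil, ?_⟩, rfl⟩)
          (Submodule.sum_mem _ fun c hc => ?_)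
        · simpa using h.ne'
        · rw [Finset.mem_erase, mem_neighborFinset] at hc
          refine Submodule.span_mono ?_ (ih (by omega) c a hc.2.symm)
          rintro v ⟨k, x, hx, rfl⟩
          exact ⟨k, x, auxS_step hG h hc.2 hc.1 hx, rfl⟩
  have hA := key i j hj l l' h1
  have hB := key i' j hj lt lt' h2.symm
  refine Submodule.isOrtho_iff_inner_eq.mp (Submodule.isOrtho_span.mpr ?_) _ hA _ hB
  rintro _ ⟨k, x, hx, rfl⟩ _ ⟨k', y, hy, rfl⟩
  refine hu _ _ _ _ ?_
  rintro rfl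
  exact auxS_disj hG h1 h2 q hq hx hy
end

section
/- Orthogonality of consensus-propagation messages meeting at a node (three nodes): let l and l̃ be distinct vertices of the tree G that are both adjacent to a vertex l' (so l, l', l̃ lie in this order on a path of length 2). Then for all rounds i' ≤ i and every inner iteration j ∈ {0,…,J}: ⟨P_{i,j}[l→l'], P_{i',j}[l̃→l']⟩ = 0. -/
open MeasureTheory SimpleGraph
open scoped RealInnerProductSpace

theorem no_avoiding_walk {W : Type*} [DecidableEq W] (G : SimpleGraph W) (hG : G.IsTree)
    {a b c : W} (hab : a ≠ b) (ha : G.Adj a c) (hb : G.Adj b c) (p : G.Walk a b) :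
    c ∈ p.support := by
  by_contra hc
  have hc' : c ∉ p.bypass.support := fun h => hc (p.support_bypass_subset h)
  have hp1 : (Walk.cons ha.symm p.bypass).IsPath :=
    (Walk.cons_isPath_iff _ _).2 ⟨p.bypass_isPath, hc'⟩
  have hp2 : (Walk.cons hb.symm Walk.nil).IsPath := by
    simp [Walk.cons_isPath_iff, hb.ne.symm]
  have h := hG.isAcyclic.path_unique ⟨_, hp1⟩ ⟨_, hp2⟩
  have h3 := congrArg (fun q : G.Path c b => q.1.length) h
  simp only [Walk.length_cons, Walk.length_nil] at h3
  exact hab (Walk.eq_of_length_eq_zero (p := p.bypass) (by omega))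

/-- Orthogonality of consensus-propagation messages meeting at a node
(three nodes): if `l ≠ lt` are both adjacent to `l'` in the tree `G` (so `l, l', lt` lie
in this order on a path of length 2), then for all rounds `i' ≤ i` and inner iterations
`j ≤ J`, `⟪P_{i,j}[l→l'], P_{i',j}[lt→l']⟫ = 0`. -/
theorem consensus_messages_orthogonal_path_three
    {𝓛 : Type*} [Fintype 𝓛] [DecidableEq 𝓛] (G : SimpleGraph 𝓛) [DecidableRel G.Adj]
    (hG : G.IsTree)
    {V : Type*} [NormedAddCommGroup V] [InnerProductSpace ℝ V]
    (u : ℕ → 𝓛 → V)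
    (hu : ∀ i i' : ℕ, ∀ l l' : 𝓛, l ≠ l' → ⟪u i l, u i' l'⟫ = 0)
    (J : ℕ) (P : ℕ → ℕ → 𝓛 → 𝓛 → V)
    (hP00 : ∀ l l' : 𝓛, G.Adj l l' → P 0 0 l l' = 0)
    (hPinit : ∀ (i : ℕ) (l l' : 𝓛), G.Adj l l' → P (i + 1) 0 l l' = P i J l l')
    (hPstep : ∀ (i j : ℕ), j < J → ∀ l l' : 𝓛, G.Adj l l' →
      P i (j + 1) l l' = u i l + ∑ l'' ∈ (G.neighborFinset l).erase l', P i j l'' l)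
    (l l' lt : 𝓛) (hne : l ≠ lt)
    (h1 : G.Adj l l') (h2 : G.Adj lt l')
    (i i' : ℕ) (hii : i' ≤ i) (j : ℕ) (hj : j ≤ J) :
    ⟪P i j l l', P i' j lt l'⟫ = 0 := by
  have key : ∀ i j : ℕ, j ≤ J → ∀ l l' : 𝓛, G.Adj l l' → ∀ v : V,
      (∀ k x, (∃ p : G.Walk l x, l' ∉ p.support) → ⟪u k x, v⟫ = 0) → ⟪P i j l l', v⟫ = 0 := by
    have inner : ∀ i, (∀ l l' : 𝓛, G.Adj l l' → ∀ v : V,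
        (∀ k x, (∃ p : G.Walk l x, l' ∉ p.support) → ⟪u k x, v⟫ = 0) → ⟪P i 0 l l', v⟫ = 0) →
        ∀ j : ℕ, j ≤ J → ∀ l l' : 𝓛, G.Adj l l' → ∀ v : V,
        (∀ k x, (∃ p : G.Walk l x, l' ∉ p.support) → ⟪u k x, v⟫ = 0) → ⟪P i j l l', v⟫ = 0 := by
      intro i h0 j
      induction j with
      | zero => intro _; exact h0
      | succ j ih =>
        intro hj l l' hl v hv
        rw [hPstep i j (by omega) l l' hl, inner_add_left, sum_inner]
        rw [hv i l ⟨Walk.nil, by simpa using hl.ne.symm⟩, zero_add]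
        refine Finset.sum_eq_zero fun m hm => ?_
        rw [Finset.mem_erase, mem_neighborFinset] at hm
        obtain ⟨hml, hm⟩ := hm
        refine ih (by omega) m l hm.symm v ?_
        rintro k x ⟨p, hp⟩
        refine hv k x ⟨Walk.cons hm p, ?_⟩
        rw [Walk.support_cons, List.mem_cons, not_or]
        refine ⟨hl.ne.symm, fun hin => hp ?_⟩
        exact p.support_takeUntil_subset_support hin
          (no_avoiding_walk G hG hml hm.symm hl.symm (p.takeUntil l' hin))
    intro i
    induction i with
    | zero =>
      refine inner 0 fun l l' hl v _ => ?_
      rw [hP00 l l' hl, inner_zero_left]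
    | succ i ih =>
      refine inner (i + 1) fun l l' hl v hv => ?_
      rw [hPinit i l l' hl]
      exact ih J le_rfl l l' hl v hv
  refine key i j hj l l' h1 _ ?_
  rintro k x ⟨p, hp⟩
  rw [real_inner_comm]
  refine key i' j hj lt l' h2 _ ?_
  rintro k' y ⟨q, hq⟩
  refine hu _ _ _ _ ?_
  rintro rfl
  have := no_avoiding_walk G hG hne h1 h2 (p.append q.reverse)
  rw [Walk.mem_support_append_iff, Walk.support_reverse, List.mem_reverse] at this
  exact this.elim hp hq
end

section
/- Closed-form covariance recursion on a tree (Theorem 2): for all τ ≤ t and every vertex l, the covariance Σ̄_{τ,t}[l] := ⟨H̃_τ[l], H̃_t[l]⟩ satisfies Σ̄_{τ,t}[l] = ⟨w_τ[l], w_t[l]⟩/(ξ_τ[l]·ξ_t[l]) + Σ_{l'∈N(l)} Σ̄_{τ,t,J}[l'→l], where the per-edge covariances Σ̄_{τ,t,j}[l→l'] := ⟨P_{⌊τ/T⌋,j}[l→l'], P_{⌊t/T⌋,j}[l→l']⟩ obey the closed recursion Σ̄_{τ,t,j}[l→l'] = ⟨u_{⌊τ/T⌋}[l], u_{⌊t/T⌋}[l]⟩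 + Σ_{l̃'∈N(l)\{l'}} Σ̄_{τ,t,j−1}[l̃'→l] for j ∈ {1,…,J}, with initial condition Σ̄_{τ,t,0}[l→l'] = Σ̄_{τ−T,t−T,J}[l→l'] (equal to 0 when t < T). -/
open MeasureTheory SimpleGraph
open scoped RealInnerProductSpace

def BrSet {L : Type*} (G : SimpleGraph L) (l l' : L) : Set L :=
  {m | ∃ p : G.Walk l m, p.IsPath ∧ l' ∉ p.support}

theorem BrSet_self {L : Type*} (G : SimpleGraph L) {l l' : L} (h : G.Adj l l') :
    l ∈ BrSet G l l' :=
  ⟨SimpleGraph.Walk.nil, by simp, by simpa using h.ne.symm⟩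

theorem BrSet_step {L : Type*} (G : SimpleGraph L) (hG : G.IsTree) {l l' l'' : L}
    (h : G.Adj l l') (h2 : G.Adj l l'') (hne : l'' ≠ l') :
    BrSet G l'' l ⊆ BrSet G l l' := by
  classical
  rintro m ⟨q, hq, hl⟩
  refine ⟨SimpleGraph.Walk.cons h2 q, by simp [SimpleGraph.Walk.cons_isPath_iff, hq, hl], ?_⟩
  intro hmem
  rw [SimpleGraph.Walk.support_cons, List.mem_cons] at hmem
  rcases hmem with hmem | hmem
  · exact h.ne hmem.symm
  · have hp1 : (q.takeUntil l' hmem).IsPath := hq.takeUntil hmem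
    have hl1 : l ∉ (q.takeUntil l' hmem).support :=
      fun hx => hl (q.support_takeUntil_subset_support hmem hx)
    let r : G.Walk l'' l' := SimpleGraph.Walk.cons h2.symm (SimpleGraph.Walk.cons h SimpleGraph.Walk.nil)
    have hr : r.IsPath := by
      simp [r, SimpleGraph.Walk.cons_isPath_iff, h.ne, h2.ne.symm, hne]
    have heq := hG.isAcyclic.path_unique ⟨_, hp1⟩ ⟨r, hr⟩
    have heq' : q.takeUntil l' hmem = r := congrArg Subtype.val heq
    apply hl1
    rw [heq']
    simp [r]

theorem BrSet_disj {L : Type*} (G : SimpleGraph L) (hG : G.IsTree) {l a b : L}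
    (ha : G.Adj l a) (hb : G.Adj l b) (hne : a ≠ b) {m : L}
    (hma : m ∈ BrSet G a l) (hmb : m ∈ BrSet G b l) : False := by
  obtain ⟨p, hp, hpl⟩ := hma
  obtain ⟨q, hq, hql⟩ := hmb
  have h1 : (SimpleGraph.Walk.cons ha p).IsPath := by
    simp [SimpleGraph.Walk.cons_isPath_iff, hp, hpl]
  have h2 : (SimpleGraph.Walk.cons hb q).IsPath := by
    simp [SimpleGraph.Walk.cons_isPath_iff, hq, hql]
  have heq := congrArg Subtype.val (hG.isAcyclic.path_unique ⟨_, h1⟩ ⟨_, h2⟩)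
  have := congrArg (fun w : G.Walk l m => w.snd) heq
  simp at this
  exact hne this

theorem BrSet_not {L : Type*} (G : SimpleGraph L) {a l : L} : l ∉ BrSet G a l := by
  rintro ⟨p, _, hpl⟩
  exact hpl p.end_mem_support

def spW {L V : Type*} [NormedAddCommGroup V] [InnerProductSpace ℝ V]
    (w : ℕ → L → V) (A : Set L) : Submodule ℝ V :=
  Submodule.span ℝ {v | ∃ s, ∃ m ∈ A, v = w s m}

theorem spW_ortho {L V : Type*} [NormedAddCommGroup V] [InnerProductSpace ℝ V]
    (w : ℕ → L → V) (hw : ∀ s t : ℕ, ∀ l l' : L, l' ≠ l → ⟪w s l', w t l⟫ = 0)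
    {A B : Set L} (hAB : ∀ m, m ∈ A → m ∈ B → False) {x y : V}
    (hx : x ∈ spW w A) (hy : y ∈ spW w B) : ⟪x, y⟫ = 0 := by
  have : (spW w A).IsOrtho (spW w B) := by
    unfold spW
    rw [Submodule.isOrtho_span]
    rintro _ ⟨s, m, hm, rfl⟩ _ ⟨t, n, hn, rfl⟩
    apply hw
    rintro rfl
    exact hAB _ hm hn
  exact Submodule.isOrtho_iff_inner_eq.1 this x hx y hy

theorem spW_mono {L V : Type*} [NormedAddCommGroup V] [InnerProductSpace ℝ V]
    (w : ℕ → L → V) {A B : Set L} (h : A ⊆ B) : spW w A ≤ spW w B := by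
  apply Submodule.span_mono
  rintro _ ⟨s, m, hm, rfl⟩
  exact ⟨s, m, h hm, rfl⟩

theorem inner_add_sum_ortho {L V : Type*} [NormedAddCommGroup V] [InnerProductSpace ℝ V]
    (S : Finset L) (a b : V) (x y : L → V)
    (h1 : ∀ i ∈ S, ⟪a, y i⟫ = 0) (h2 : ∀ i ∈ S, ⟪x i, b⟫ = 0)
    (h3 : ∀ i ∈ S, ∀ j ∈ S, i ≠ j → ⟪x i, y j⟫ = 0) :
    ⟪a + ∑ i ∈ S, x i, b + ∑ i ∈ S, y i⟫ = ⟪a, b⟫ + ∑ i ∈ S, ⟪x i, y i⟫ := by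
  rw [inner_add_left, inner_add_right, inner_add_right, inner_sum, sum_inner, sum_inner,
    Finset.sum_eq_zero h1, Finset.sum_eq_zero h2, add_zero, zero_add]
  congr 1
  apply Finset.sum_congr rfl
  intro i hi
  rw [inner_sum]
  exact Finset.sum_eq_single i (fun j hj hji => h3 i hi j hj hji.symm) (fun h => absurd hi h)

/-- **Theorem 2.** Closed-form covariance recursion on a tree: with round
inputs `u i l = w (iT) l / ξ (iT) l`, consensus-propagation messages `P`, and
`H̃ t l = w t l / ξ t l + ∑_{l' ∈ N(l)} P (⌊t/T⌋) J l' l`, the covariances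
`Σ̄_{τ,t}[l] = ⟪H̃ τ l, H̃ t l⟫` and
`Σ̄_{τ,t,j}[l→l'] = ⟪P (⌊τ/T⌋) j l l', P (⌊t/T⌋) j l l'⟫` satisfy, for all `τ ≤ t`,
`Σ̄_{τ,t}[l] = ⟪w τ l, w t l⟫/(ξ τ l · ξ t l) + ∑_{l'∈N(l)} Σ̄_{τ,t,J}[l'→l]`, and the
per-edge covariances obey the closed recursion
`Σ̄_{τ,t,j}[l→l'] = ⟪u (⌊τ/T⌋) l, u (⌊t/T⌋) l⟫ + ∑_{l̃'∈N(l)\{l'}} Σ̄_{τ,t,j−1}[l̃'→l]`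
for `1 ≤ j ≤ J`, with initial condition `Σ̄_{τ,t,0}[l→l'] = Σ̄_{τ−T,t−T,J}[l→l']`
(equal to `0` when `t < T`). -/
theorem covariance_recursion_tree
    {𝓛 : Type*} [Fintype 𝓛] [DecidableEq 𝓛] (G : SimpleGraph 𝓛) [DecidableRel G.Adj]
    (hG : G.IsTree)
    {V : Type*} [NormedAddCommGroup V] [InnerProductSpace ℝ V]
    (T J : ℕ) (hT : 1 ≤ T) (hJ : 1 ≤ J)
    (w : ℕ → 𝓛 → V) (ξ : ℕ → 𝓛 → ℝ) (hξ : ∀ t l, ξ t l ≠ 0)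
    (hw : ∀ s t : ℕ, ∀ l l' : 𝓛, l' ≠ l → ⟪w s l', w t l⟫ = 0)
    (u : ℕ → 𝓛 → V) (hu : ∀ i l, u i l = (ξ (i * T) l)⁻¹ • w (i * T) l)
    (P : ℕ → ℕ → 𝓛 → 𝓛 → V)
    (hP00 : ∀ l l' : 𝓛, G.Adj l l' → P 0 0 l l' = 0)
    (hPinit : ∀ (i : ℕ) (l l' : 𝓛), G.Adj l l' → P (i + 1) 0 l l' = P i J l l')
    (hPstep : ∀ (i j : ℕ), j < J → ∀ l l' : 𝓛, G.Adj l l' →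
      P i (j + 1) l l' = u i l + ∑ l'' ∈ (G.neighborFinset l).erase l', P i j l'' l)
    (Htil : ℕ → 𝓛 → V)
    (hHtil : ∀ (t : ℕ) (l : 𝓛),
      Htil t l = (ξ t l)⁻¹ • w t l + ∑ l' ∈ G.neighborFinset l, P (t / T) J l' l)
    (Sc : ℕ → ℕ → ℕ → 𝓛 → 𝓛 → ℝ)
    (hSc : ∀ (τ t j : ℕ) (l l' : 𝓛),
      Sc τ t j l l' = ⟪P (τ / T) j l l', P (t / T) j l l'⟫) :
    (∀ (τ t : ℕ), τ ≤ t → ∀ l : 𝓛,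
        ⟪Htil τ l, Htil t l⟫ =
          ⟪w τ l, w t l⟫ / (ξ τ l * ξ t l) + ∑ l' ∈ G.neighborFinset l, Sc τ t J l' l)
      ∧ (∀ (τ t : ℕ), τ ≤ t → ∀ j : ℕ, j < J → ∀ l l' : 𝓛, G.Adj l l' →
          Sc τ t (j + 1) l l' =
            ⟪u (τ / T) l, u (t / T) l⟫ +
              ∑ lt' ∈ (G.neighborFinset l).erase l', Sc τ t j lt' l)
      ∧ (∀ (τ t : ℕ), τ ≤ t → ∀ l l' : 𝓛, G.Adj l l' →
          (T ≤ τ → Sc τ t 0 l l' = Sc (τ - T) (t - T) J l l') ∧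
            (t < T → Sc τ t 0 l l' = 0)) := by
  have wmem : ∀ t l (A : Set 𝓛) (c : ℝ), l ∈ A → c • w t l ∈ spW w A := fun t l A c h =>
    Submodule.smul_mem _ _ (Submodule.subset_span ⟨t, l, h, rfl⟩)
  have key : ∀ i j, j ≤ J → ∀ l l', G.Adj l l' → P i j l l' ∈ spW w (BrSet G l l') := by
    have step : ∀ i, (∀ l l', G.Adj l l' → P i 0 l l' ∈ spW w (BrSet G l l')) →
        ∀ j, j ≤ J → ∀ l l', G.Adj l l' → P i j l l' ∈ spW w (BrSet G l l') := by
      intro i h0 j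
      induction j with
      | zero => intro _; exact h0
      | succ j ih =>
        intro hj l l' h
        rw [hPstep i j hj l l' h]
        refine Submodule.add_mem _ ?_ (Submodule.sum_mem _ ?_)
        · rw [hu]
          exact wmem _ _ _ _ (BrSet_self G h)
        · intro c hc
          rw [Finset.mem_erase, SimpleGraph.mem_neighborFinset] at hc
          exact spW_mono w (BrSet_step G hG h hc.2 hc.1) (ih (by omega) c l hc.2.symm)
    intro i
    induction i with
    | zero =>
      apply step
      intro l l' h
      rw [hP00 l l' h]
      exact Submodule.zero_mem _
    | succ i ih =>
      apply step
      intro l l' h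
      rw [hPinit i l l' h]
      exact ih J le_rfl l l' h
  have main : ∀ (S : Finset 𝓛) (l : 𝓛) (s t i k j : ℕ) (c d : ℝ), (∀ m ∈ S, G.Adj l m) → j ≤ J →
      ⟪c • w s l + ∑ m ∈ S, P i j m l, d • w t l + ∑ m ∈ S, P k j m l⟫ =
        ⟪c • w s l, d • w t l⟫ + ∑ m ∈ S, ⟪P i j m l, P k j m l⟫ := by
    intro S l s t i k j c d hS hj
    apply inner_add_sum_ortho
    · intro m hm
      refine spW_ortho w hw (A := {l}) ?_ (wmem _ _ _ _ rfl) (key k j hj m l (hS m hm).symm)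
      rintro _ rfl h
      exact BrSet_not G h
    · intro m hm
      refine spW_ortho w hw (B := {l}) ?_ (key i j hj m l (hS m hm).symm) (wmem _ _ _ _ rfl)
      rintro _ h rfl
      exact BrSet_not G h
    · intro m hm n hn hmn
      exact spW_ortho w hw (fun _ => BrSet_disj G hG (hS m hm) (hS n hn) hmn)
        (key i j hj m l (hS m hm).symm) (key k j hj n l (hS n hn).symm)
  refine ⟨?_, ?_, ?_⟩
  · intro τ t _ l
    rw [hHtil, hHtil, main _ _ _ _ _ _ _ _ _ (fun m hm => by simpa using hm) le_rfl]
    simp only [hSc]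
    congr 1
    rw [real_inner_smul_left, real_inner_smul_right]
    have h1 := hξ τ l
    have h2 := hξ t l
    field_simp
  · intro τ t _ j hj l l' h
    simp only [hSc]
    rw [hPstep _ j hj l l' h, hPstep _ j hj l l' h, hu, hu,
      main _ _ _ _ _ _ _ _ _ (fun m hm => by
        rw [Finset.mem_erase, SimpleGraph.mem_neighborFinset] at hm; exact hm.2) hj.le]
  · intro τ t hτ l l' h
    refine ⟨fun hTτ => ?_, fun ht => ?_⟩
    · simp only [hSc]
      have e : ∀ a, T ≤ a → a / T = (a - T) / T + 1 := fun a ha =>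
        Nat.div_eq_sub_div hT ha
      rw [e τ hTτ, e t (hTτ.trans hτ), hPinit _ l l' h, hPinit _ l l' h]
    · rw [hSc, Nat.div_eq_of_lt ht, hP00 l l' h, inner_zero_right]
end

section
/- Conditioning an i.i.d. Gaussian matrix on linear observations: let M, N, t be positive integers with t ≤ N, let σ² > 0, let A and Ã be independent M×N random matrices each having i.i.d. N(0, σ²) entries, and let U ∈ ℝ^{N×t} be a deterministic matrix of full column rank. With U† := (UᵀU)⁻¹Uᵀ and P⊥_U := I_N − U(UᵀU)⁻¹Uᵀ, the random pairs (AU, A) and (AU, (AU)·U† + Ã·P⊥_U) have the same joint distribution; equivalently, the conditional distribution of A given the observation X = AU is that of X U† + Ã P⊥_U. -/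
open MeasureTheory ProbabilityTheory Matrix

lemma gmc_charFunDual (M N : ℕ) (v : NNReal) (L : StrongDual ℝ (Fin M → Fin N → ℝ)) :
    charFunDual (Measure.pi fun _ : Fin M => Measure.pi fun _ : Fin N => gaussianReal 0 v) L =
      Complex.exp (-(v / 2 : ℝ) *
        ((∑ i, ∑ j, (L (Pi.single i (Pi.single j 1))) ^ 2 : ℝ) : ℂ)) := by
  have h1 : ∀ l : StrongDual ℝ ℝ, charFunDual (gaussianReal 0 v) l =
      Complex.exp (-(v / 2 : ℝ) * (((l 1) ^ 2 : ℝ) : ℂ)) := by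
    intro l
    have := charFun_gaussianReal (μ := 0) (v := v) (l 1)
    rw [charFun_apply_real] at this
    rw [charFunDual_apply]
    have h2 : ∀ x : ℝ, l x = l 1 * x := by
      intro x
      have := l.map_smul x 1
      simp only [smul_eq_mul, mul_one] at this
      rw [this, mul_comm]
    have h3 : ∀ x : ℝ, Complex.exp (l x * Complex.I) = Complex.exp (l 1 * x * Complex.I) := by
      intro x
      rw [h2 x]
      push_cast
      rfl
    rw [integral_congr_ae (Filter.Eventually.of_forall h3), this]
    congr 1
    push_cast
    ring
  rw [charFunDual_pi]
  simp_rw [charFunDual_pi, h1]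
  simp_rw [← Complex.exp_sum]
  congr 1
  push_cast
  simp only [Finset.mul_sum]
  rfl

noncomputable def gmcR (M N : ℕ) (P : Matrix (Fin N) (Fin N) ℝ) :
    (Fin M → Fin N → ℝ) →L[ℝ] (Fin M → Fin N → ℝ) :=
  LinearMap.toContinuousLinearMap
    { toFun := fun x => fun i => (x i) ᵥ* P
      map_add' := fun x y => by ext i j; simp [Matrix.add_vecMul]
      map_smul' := fun c x => by ext i j; simp [Matrix.smul_vecMul] }

lemma gmcR_apply (M N : ℕ) (P : Matrix (Fin N) (Fin N) ℝ) (x : Fin M → Fin N → ℝ) (i : Fin M) :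
    gmcR M N P x i = (x i) ᵥ* P := rfl

lemma gmc_sq (M N : ℕ) (P : Matrix (Fin N) (Fin N) ℝ) (L : StrongDual ℝ (Fin M → Fin N → ℝ))
    (i : Fin M) :
    ∑ j, ((L.comp (gmcR M N P)) (Pi.single i (Pi.single j 1))) ^ 2 =
      (fun k => L (Pi.single i (Pi.single k 1))) ⬝ᵥ
        ((Pᵀ * P) *ᵥ fun k => L (Pi.single i (Pi.single k 1))) := by
  have h : ∀ j, (L.comp (gmcR M N P)) (Pi.single i (Pi.single j 1)) =
      (P *ᵥ fun k => L (Pi.single i (Pi.single k 1))) j := by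
    intro j
    have : gmcR M N P (Pi.single i (Pi.single j 1)) =
        ∑ k, P j k • (Pi.single i (Pi.single k 1) : Fin M → Fin N → ℝ) := by
      ext a b
      rw [gmcR_apply]
      by_cases hai : a = i
      · subst hai
        simp [Finset.sum_apply, Pi.single_apply]
      · simp [Finset.sum_apply, Pi.single_apply, hai]
    rw [ContinuousLinearMap.comp_apply, this, map_sum]
    simp [Matrix.mulVec, dotProduct]
  simp_rw [h]
  rw [← Matrix.mulVec_mulVec, Matrix.dotProduct_mulVec, Matrix.vecMul_transpose]
  simp [dotProduct, sq]

lemma gmc_law (M N : ℕ) (v : NNReal) (P Q : Matrix (Fin N) (Fin N) ℝ)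
    (hPQ : Pᵀ * P + Qᵀ * Q = 1) :
    Measure.map (fun p : (Fin M → Fin N → ℝ) × (Fin M → Fin N → ℝ) =>
        gmcR M N P p.1 + gmcR M N Q p.2)
      ((Measure.pi fun _ : Fin M => Measure.pi fun _ : Fin N => gaussianReal 0 v).prod
        (Measure.pi fun _ : Fin M => Measure.pi fun _ : Fin N => gaussianReal 0 v)) =
      Measure.pi fun _ : Fin M => Measure.pi fun _ : Fin N => gaussianReal 0 v := by
  have : IsFiniteMeasure (Measure.map (fun p : (Fin M → Fin N → ℝ) × (Fin M → Fin N → ℝ) =>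
        gmcR M N P p.1 + gmcR M N Q p.2)
      ((Measure.pi fun _ : Fin M => Measure.pi fun _ : Fin N => gaussianReal 0 v).prod
        (Measure.pi fun _ : Fin M => Measure.pi fun _ : Fin N => gaussianReal 0 v))) :=
    inferInstance
  apply Measure.ext_of_charFunDual
  ext L
  have := charFunDual_map (μ := ((Measure.pi fun _ : Fin M => Measure.pi fun _ : Fin N =>
      gaussianReal 0 v).prod
        (Measure.pi fun _ : Fin M => Measure.pi fun _ : Fin N => gaussianReal 0 v)))
      ((gmcR M N P).coprod (gmcR M N Q)) L
  have h2 : ⇑((gmcR M N P).coprod (gmcR M N Q)) = (fun p => gmcR M N P p.1 + gmcR M N Q p.2) := by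
    ext p; simp
  rw [h2] at this
  rw [this, charFunDual_prod, ContinuousLinearMap.comp_assoc, ContinuousLinearMap.comp_assoc,
    ContinuousLinearMap.coprod_comp_inl, ContinuousLinearMap.coprod_comp_inr,
    gmc_charFunDual, gmc_charFunDual, gmc_charFunDual, ← Complex.exp_add, ← mul_add,
    ← Complex.ofReal_add, ← Finset.sum_add_distrib]
  simp_rw [gmc_sq, ← dotProduct_add, ← Matrix.add_mulVec, hPQ, Matrix.one_mulVec]
  simp [dotProduct, sq]

lemma gmc_unit (N t : ℕ) (U : Matrix (Fin N) (Fin t) ℝ) (hU : U.rank = t) :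
    IsUnit (Uᵀ * U) := by
  rw [← Matrix.mulVec_injective_iff_isUnit]
  have h : (Uᵀ * U).rank = t := by rw [Matrix.rank_transpose_mul_self, hU]
  have h3 : Function.Surjective (Uᵀ * U).mulVecLin := by
    rw [← LinearMap.range_eq_top]
    apply Submodule.eq_top_of_finrank_eq
    simpa [Matrix.rank] using h
  exact LinearMap.injective_iff_surjective.mpr h3

theorem gaussian_matrix_conditioning
    {Ω : Type*} [MeasureSpace Ω] [IsProbabilityMeasure (ℙ : Measure Ω)]
    (M N t : ℕ) (hM : 0 < M) (hN : 0 < N) (htpos : 0 < t) (htN : t ≤ N)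
    (v : NNReal) (hv : 0 < v)
    (A At : Ω → Matrix (Fin M) (Fin N) ℝ)
    (hAm : Measurable fun ω => (fun i j => A ω i j : Fin M → Fin N → ℝ))
    (hAtm : Measurable fun ω => (fun i j => At ω i j : Fin M → Fin N → ℝ))
    (hAlaw : Measure.map (fun ω => (fun i j => A ω i j : Fin M → Fin N → ℝ)) ℙ =
      Measure.pi fun _ : Fin M => Measure.pi fun _ : Fin N => gaussianReal 0 v)
    (hAtlaw : Measure.map (fun ω => (fun i j => At ω i j : Fin M → Fin N → ℝ)) ℙ =
      Measure.pi fun _ : Fin M => Measure.pi fun _ : Fin N => gaussianReal 0 v)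
    (hindep : IndepFun (fun ω => (fun i j => A ω i j : Fin M → Fin N → ℝ))
      (fun ω => (fun i j => At ω i j : Fin M → Fin N → ℝ)))
    (U : Matrix (Fin N) (Fin t) ℝ) (hU : U.rank = t)
    (Udag : Matrix (Fin t) (Fin N) ℝ) (hUdag : Udag = (Uᵀ * U)⁻¹ * Uᵀ)
    (Pperp : Matrix (Fin N) (Fin N) ℝ) (hPperp : Pperp = 1 - U * (Uᵀ * U)⁻¹ * Uᵀ) :
    Measure.map (fun ω =>
        ((fun i j => (A ω * U) i j : Fin M → Fin t → ℝ),
          (fun i j => A ω i j : Fin M → Fin N → ℝ))) ℙ =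
      Measure.map (fun ω =>
        ((fun i j => (A ω * U) i j : Fin M → Fin t → ℝ),
          (fun i j => (A ω * U * Udag + At ω * Pperp) i j : Fin M → Fin N → ℝ))) ℙ := by
  have hunit : IsUnit (Uᵀ * U).det := (Matrix.isUnit_iff_isUnit_det _).mp (gmc_unit N t U hU)
  have hdU : Udag * U = 1 := by
    rw [hUdag, Matrix.mul_assoc, Matrix.nonsing_inv_mul _ hunit]
  have hPp : Pperp = 1 - U * Udag := by rw [hPperp, hUdag, Matrix.mul_assoc]
  have hPU : Pperp * U = 0 := by
    rw [hPp, Matrix.sub_mul, Matrix.mul_assoc, hdU]; simp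
  have hsymm : (U * Udag)ᵀ = U * Udag := by
    rw [hUdag]
    simp [Matrix.transpose_mul, Matrix.transpose_nonsing_inv, Matrix.mul_assoc]
  have hidem : (U * Udag) * (U * Udag) = U * Udag := by
    rw [Matrix.mul_assoc, ← Matrix.mul_assoc Udag, hdU, Matrix.one_mul]
  have hPQ : (U * Udag)ᵀ * (U * Udag) + Pperpᵀ * Pperp = 1 := by
    rw [hPp, Matrix.transpose_sub, Matrix.transpose_one, hsymm, Matrix.sub_mul, Matrix.mul_sub (U * Udag),
      hidem]
    simp
  have hjoint := (indepFun_iff_map_prod_eq_prod_map_map hAm.aemeasurable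
    hAtm.aemeasurable).mp hindep
  rw [hAlaw, hAtlaw] at hjoint
  have hlaw := gmc_law M N v (U * Udag) Pperp hPQ
  rw [← hjoint, Measure.map_map (by fun_prop) (by fun_prop)] at hlaw
  have hBeq : ((fun p : (Fin M → Fin N → ℝ) × (Fin M → Fin N → ℝ) =>
        gmcR M N (U * Udag) p.1 + gmcR M N Pperp p.2) ∘ fun ω =>
        ((fun i j => A ω i j : Fin M → Fin N → ℝ), (fun i j => At ω i j : Fin M → Fin N → ℝ))) =
      fun ω => (fun i j => (A ω * U * Udag + At ω * Pperp) i j : Fin M → Fin N → ℝ) := by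
    ext ω i j
    rw [Matrix.mul_assoc]
    rfl
  have hBm : Measurable fun ω =>
      (fun i j => (A ω * U * Udag + At ω * Pperp) i j : Fin M → Fin N → ℝ) := by
    rw [← hBeq]
    fun_prop
  rw [hBeq, ← hAlaw] at hlaw
  have hg : Measurable fun x : Fin M → Fin N → ℝ =>
      ((fun i j => ((Matrix.of x) * U) i j : Fin M → Fin t → ℝ), x) := by
    simp only [Matrix.mul_apply, Matrix.of_apply]
    fun_prop
  have h1 := Measure.map_map (μ := (ℙ : Measure Ω)) hg hAm
  have h2 := Measure.map_map (μ := (ℙ : Measure Ω)) hg hBm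
  rw [hlaw, h1] at h2
  refine Eq.trans h2 ?_
  congr 1
  ext ω : 1
  have hBU : (A ω * U * Udag + At ω * Pperp) * U = A ω * U := by
    rw [Matrix.add_mul, Matrix.mul_assoc _ Udag, hdU, Matrix.mul_assoc (At ω), hPU]
    simp
  refine Prod.ext ?_ rfl
  change (A ω * U * Udag + At ω * Pperp) * U = (A ω * U : Matrix _ _ ℝ)
  exact hBU
end

section
/- Summation consensus is the unique fixed point of consensus propagation on a tree: there is exactly one family of messages (m[l→l']), indexed by ordered pairs of adjacent vertices of G and with values in V, satisfying the fixed-point equations m[l→l'] = a[l] + Σ_{l''∈N(l)\{l'}} m[l''→l] for every ordered pair (l,l') of adjacent vertices; it is given by m[l→l'] = Σ_{l''∈C(l,l')} a[l'']. Consequently, every vertex recovers the total sum: a[l] + Σ_{l'∈N(l)} m[l'→l] = Σ_{l''∈𝓛} a[l''] for every vertex l. -/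
open SimpleGraph

theorem cp_bridge {L : Type*} {G : SimpleGraph L} (hG : G.IsTree) {l l' : L} (h : G.Adj l l') :
    ¬ (G.deleteEdges {s(l, l')}).Reachable l l' := by
  have := isAcyclic_iff_forall_adj_isBridge.1 hG.isAcyclic h
  rw [isBridge_iff] at this
  exact this

theorem cp_or {L : Type*} {G : SimpleGraph L} {l l' x : L} (p : G.Walk x l) :
    (G.deleteEdges {s(l, l')}).Reachable x l ∨ (G.deleteEdges {s(l, l')}).Reachable x l' := by
  induction p with
  | nil => exact Or.inl (Reachable.refl _)
  | @cons u v w h p ih =>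
    by_cases he : s(u, v) = s(w, l')
    · rw [Sym2.eq_iff] at he
      rcases he with ⟨rfl, rfl⟩ | ⟨rfl, rfl⟩
      · exact Or.inl (Reachable.refl _)
      · exact Or.inr (Reachable.refl _)
    · have ha : (G.deleteEdges {s(w, l')}).Adj u v := by
        rw [deleteEdges_adj]; exact ⟨h, he⟩
      exact ih.imp ha.reachable.trans ha.reachable.trans

theorem cp_compl {L : Type*} {G : SimpleGraph L} (hG : G.IsTree) {l l' : L} (h : G.Adj l l')
    (x : L) : (G.deleteEdges {s(l, l')}).Reachable x l ↔
      ¬ (G.deleteEdges {s(l', l)}).Reachable x l' := by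
  rw [Sym2.eq_swap (a := l') (b := l)]
  constructor
  · intro h1 h2
    exact cp_bridge hG h (h1.symm.trans h2)
  · intro h2
    obtain ⟨p⟩ := hG.connected.preconnected x l
    exact (cp_or p).resolve_right h2

theorem cp_key {L : Type*} {G : SimpleGraph L} (hG : G.IsTree) {l l' : L} (h : G.Adj l l')
    (x : L) (p : G.Walk l x) (hp : p.IsPath) :
    (G.deleteEdges {s(l', l)}).Reachable x l' ↔ x ≠ l ∧ p.snd = l' := by
  classical
  rw [Sym2.eq_swap (a := l') (b := l)]
  constructor
  · intro hr
    have hb := cp_bridge hG h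
    refine ⟨fun e => hb (e ▸ hr), ?_⟩
    obtain ⟨q, hq⟩ := hr.symm.exists_isPath
    have hl : l ∉ q.support := fun hm => hb (q.takeUntil l hm).reachable.symm
    have hle : G.deleteEdges {s(l, l')} ≤ G := deleteEdges_le _
    have hc : (Walk.cons h (q.mapLe hle)).IsPath := by
      rw [Walk.cons_isPath_iff]
      refine ⟨hq.mapLe hle, ?_⟩
      simpa using hl
    have := (hG.existsUnique_path l x).unique hp hc
    rw [this]; simp
  · rintro ⟨hx, hs⟩
    cases p with
    | nil => exact absurd rfl hx
    | cons h' q =>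
      simp only [Walk.snd_cons] at hs
      subst hs
      rw [Walk.cons_isPath_iff] at hp
      refine (Walk.toDeleteEdges {s(l, _)} q ?_).reachable.symm
      intro e he hes
      rw [Set.mem_singleton_iff] at hes
      subst hes
      exact hp.2 (q.fst_mem_support_of_mem_edges he)

theorem cp_total {L : Type*} [Fintype L] [DecidableEq L] (G : SimpleGraph L) [DecidableRel G.Adj]
    (hG : G.IsTree) {V : Type*} [AddCommGroup V] (a : L → V)
    (C : L → L → Finset L)
    (hC : ∀ l l' x : L, x ∈ C l l' ↔ (G.deleteEdges {s(l, l')}).Reachable x l) (l : L) :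
    (a l + ∑ l' ∈ G.neighborFinset l, ∑ l'' ∈ C l' l, a l'') = ∑ l'' : L, a l'' := by
  choose p hp _ using hG.existsUnique_path
  rw [← Finset.add_sum_erase _ _ (Finset.mem_univ l)]
  congr 1
  rw [← Finset.sum_fiberwise_of_maps_to (s := Finset.univ.erase l) (t := G.neighborFinset l)
    (g := fun x => (p l x).snd)]
  · refine Finset.sum_congr rfl fun l' hl' => Finset.sum_congr ?_ fun _ _ => rfl
    rw [mem_neighborFinset] at hl'
    ext x
    rw [hC]
    rw [Finset.mem_filter, Finset.mem_erase]
    simpa using cp_key hG hl' x (p l x) (hp l x)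
  · intro x hx
    rw [mem_neighborFinset]
    exact Walk.adj_snd (Walk.not_nil_of_ne (Finset.ne_of_mem_erase hx).symm)

theorem cp_fix {L : Type*} [Fintype L] [DecidableEq L] (G : SimpleGraph L) [DecidableRel G.Adj]
    (hG : G.IsTree) {V : Type*} [AddCommGroup V] (a : L → V)
    (C : L → L → Finset L)
    (hC : ∀ l l' x : L, x ∈ C l l' ↔ (G.deleteEdges {s(l, l')}).Reachable x l)
    (l l' : L) (h : G.Adj l l') :
    (∑ l'' ∈ C l l', a l'') =
      a l + ∑ l'' ∈ (G.neighborFinset l).erase l', ∑ l''' ∈ C l'' l, a l''' := by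
  have ht := cp_total G hG a C hC l
  rw [← Finset.add_sum_erase _ _ ((mem_neighborFinset G l l').2 h)] at ht
  have hc : C l l' = (C l' l)ᶜ := by
    ext x
    rw [Finset.mem_compl, hC, hC]
    exact cp_compl hG h x
  rw [hc]
  have h2 := Finset.sum_add_sum_compl (C l' l) a
  rw [← ht, add_left_comm] at h2
  exact add_left_cancel h2

open scoped Classical in
/-- Summation consensus is the unique fixed point of consensus
propagation on a tree: the family `m[l→l'] = ∑_{l'' ∈ C(l,l')} a l''` (sum over the
component of `l` after deleting the edge `{l,l'}`) satisfies the fixed-point equations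
`m[l→l'] = a l + ∑_{l''∈N(l)\{l'}} m[l''→l]`, any family satisfying these equations
agrees with it on all ordered pairs of adjacent vertices, and consequently every vertex
recovers the total sum `a l + ∑_{l'∈N(l)} m[l'→l] = ∑_{l''} a l''`. -/
theorem consensus_propagation_unique_fixed_point
    {𝓛 : Type*} [Fintype 𝓛] [DecidableEq 𝓛] (G : SimpleGraph 𝓛) [DecidableRel G.Adj]
    (hG : G.IsTree)
    {V : Type*} [AddCommGroup V] [Module ℝ V]
    (a : 𝓛 → V)
    (Cset : 𝓛 → 𝓛 → Finset 𝓛)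
    (hC : ∀ l l' : 𝓛, Cset l l' =
      Finset.univ.filter fun x => (G.deleteEdges {s(l, l')}).Reachable x l) :
    (∀ l l' : 𝓛, G.Adj l l' →
        (∑ l'' ∈ Cset l l', a l'') =
          a l + ∑ l'' ∈ (G.neighborFinset l).erase l', ∑ l''' ∈ Cset l'' l, a l''')
      ∧ (∀ m : 𝓛 → 𝓛 → V,
          (∀ l l' : 𝓛, G.Adj l l' →
            m l l' = a l + ∑ l'' ∈ (G.neighborFinset l).erase l', m l'' l) →
          ∀ l l' : 𝓛, G.Adj l l' → m l l' = ∑ l'' ∈ Cset l l', a l'')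
      ∧ (∀ l : 𝓛,
          (a l + ∑ l' ∈ G.neighborFinset l, ∑ l'' ∈ Cset l' l, a l'') =
            ∑ l'' : 𝓛, a l'') := by
  have hC' : ∀ l l' x : 𝓛, x ∈ Cset l l' ↔ (G.deleteEdges {s(l, l')}).Reachable x l := by
    intro l l' x
    rw [hC]
    simp
  have hfix : ∀ l l' : 𝓛, G.Adj l l' →
        (∑ l'' ∈ Cset l l', a l'') =
          a l + ∑ l'' ∈ (G.neighborFinset l).erase l', ∑ l''' ∈ Cset l'' l, a l''' := by
    intro l l' h
    convert cp_fix G hG a Cset hC' l l' h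
  refine ⟨hfix, ?_, fun l => cp_total G hG a Cset hC' l⟩
  intro m hm
  have hlt : ∀ l l' l'' : 𝓛, G.Adj l l' → l'' ∈ (G.neighborFinset l).erase l' →
      (Cset l'' l).card < (Cset l l').card := by
    intro l l' l'' h hl''
    have h1 := cp_fix G hG (fun _ => (1 : ℤ)) Cset hC' l l' h
    simp only [Finset.sum_const, nsmul_eq_mul, mul_one] at h1
    have h2 := Finset.single_le_sum (f := fun y => ((Cset y l).card : ℤ))
      (fun y _ => Int.natCast_nonneg _) hl''
    have h3 : ((Cset l l').card : ℤ) =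
        1 + ∑ y ∈ (G.neighborFinset l).erase l', ((Cset y l).card : ℤ) := by
      convert h1
    omega
  have main : ∀ n : ℕ, ∀ l l' : 𝓛, (Cset l l').card = n → G.Adj l l' →
      m l l' = ∑ l'' ∈ Cset l l', a l'' := by
    intro n
    induction n using Nat.strong_induction_on with
    | _ n ih =>
      intro l l' hn h
      rw [hm l l' h, hfix l l' h]
      congr 1
      refine Finset.sum_congr rfl fun y hy => ?_
      refine ih _ (hn ▸ hlt l l' y h hy) y l rfl ?_
      have := Finset.mem_of_mem_erase hy
      rw [mem_neighborFinset] at this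
      exact this.symm
  exact fun l l' h => main _ l l' rfl h
end

section
/- Subtree support of consensus-propagation messages on a tree: every message P_{i,j}[l→l'] lies in the linear span of the set {u_{i'}[l''] : 0 ≤ i' ≤ i, l'' ∈ C(l,l')}; in particular, P_{i,j}[l→l'] involves no input vector attached to l' or to any vertex separated from l by the edge {l,l'}. -/
open SimpleGraph

theorem css_aux {L : Type*} (G : SimpleGraph L) (hG : G.IsAcyclic) {l l' m x : L}
    (hm : G.Adj m l) (hne : m ≠ l')
    (h : (G.deleteEdges {s(m, l)}).Reachable x m) :
    (G.deleteEdges {s(l, l')}).Reachable x l := by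
  have hb : ¬ (G.deleteEdges {s(m, l)}).Reachable l m := by
    have := isAcyclic_iff_forall_adj_isBridge.1 hG hm
    rw [isBridge_iff] at this
    intro h
    first
      | exact this h.symm
      | exact this.2 h.symm
  have key : ∀ y z, (G.deleteEdges {s(m, l)}).Walk y z → z = m →
      (G.deleteEdges {s(l, l')}).Reachable y z := by
    intro y z p
    induction p with
    | nil => intro _; exact Reachable.refl _
    | @cons a b c hab p ih =>
      intro hc
      subst hc
      refine Reachable.trans (Adj.reachable ?_) (ih rfl)
      have hb1 : b ≠ l := by
        rintro rfl
        exact hb p.reachable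
      have ha1 : a ≠ l := by
        rintro rfl
        exact hb (hab.reachable.trans p.reachable)
      rw [deleteEdges_adj] at hab ⊢
      refine ⟨hab.1, ?_⟩
      simp only [Set.mem_singleton_iff, Sym2.eq_iff]
      tauto
  obtain ⟨p⟩ := h
  refine (key x m p rfl).trans (Adj.reachable ?_)
  rw [deleteEdges_adj]
  refine ⟨hm, ?_⟩
  have := hm.ne
  simp only [Set.mem_singleton_iff, Sym2.eq_iff]
  tauto

/-- Subtree support of consensus-propagation messages on a tree: every
message `P_{i,j}[l→l']` lies in the linear span of the input vectors
`{u_{i'}[l''] : i' ≤ i, l'' ∈ C(l,l')}`, where `C(l,l')` is the connected component of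
`l` in the graph obtained from `G` by deleting the edge `{l,l'}`.  In particular, the
message involves no input vector attached to `l'` or to any vertex separated from `l` by
the edge `{l,l'}`. -/
theorem consensus_message_subtree_support
    {𝓛 : Type*} [Fintype 𝓛] [DecidableEq 𝓛] (G : SimpleGraph 𝓛) [DecidableRel G.Adj]
    (hG : G.IsTree)
    {V : Type*} [AddCommGroup V] [Module ℝ V]
    (u : ℕ → 𝓛 → V)
    (J : ℕ) (P : ℕ → ℕ → 𝓛 → 𝓛 → V)
    (hP00 : ∀ l l' : 𝓛, G.Adj l l' → P 0 0 l l' = 0)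
    (hPinit : ∀ (i : ℕ) (l l' : 𝓛), G.Adj l l' → P (i + 1) 0 l l' = P i J l l')
    (hPstep : ∀ (i j : ℕ), j < J → ∀ l l' : 𝓛, G.Adj l l' →
      P i (j + 1) l l' = u i l + ∑ l'' ∈ (G.neighborFinset l).erase l', P i j l'' l)
    (i j : ℕ) (hj : j ≤ J) (l l' : 𝓛) (hadj : G.Adj l l') :
    P i j l l' ∈ Submodule.span ℝ
      {v : V | ∃ i' ≤ i, ∃ l'' : 𝓛,
        (G.deleteEdges {s(l, l')}).Reachable l'' l ∧ v = u i' l''} := by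
  induction i generalizing j l l' with
  | zero =>
    induction j generalizing l l' with
    | zero => rw [hP00 l l' hadj]; exact Submodule.zero_mem _
    | succ j ih =>
      rw [hPstep _ j hj l l' hadj]
      refine Submodule.add_mem _ (Submodule.subset_span ⟨_, le_rfl, l, Reachable.refl _, rfl⟩)
        (Submodule.sum_mem _ fun m hm => ?_)
      rw [Finset.mem_erase, mem_neighborFinset] at hm
      refine Submodule.span_mono ?_ (ih (Nat.le_of_succ_le hj) m l hm.2.symm)
      rintro v ⟨i', hi', x, hx, rfl⟩
      exact ⟨i', hi', x, css_aux G hG.isAcyclic hm.2.symm hm.1 hx, rfl⟩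
  | succ i ihi =>
    induction j generalizing l l' with
    | zero =>
      rw [hPinit i l l' hadj]
      refine Submodule.span_mono ?_ (ihi J le_rfl l l' hadj)
      rintro v ⟨i', hi', x, hx, rfl⟩
      exact ⟨i', Nat.le_succ_of_le hi', x, hx, rfl⟩
    | succ j ih =>
      rw [hPstep _ j hj l l' hadj]
      refine Submodule.add_mem _ (Submodule.subset_span ⟨_, le_rfl, l, Reachable.refl _, rfl⟩)
        (Submodule.sum_mem _ fun m hm => ?_)
      rw [Finset.mem_erase, mem_neighborFinset] at hm
      refine Submodule.span_mono ?_ (ih (Nat.le_of_succ_le hj) m l hm.2.symm)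
      rintro v ⟨i', hi', x, hx, rfl⟩
      exact ⟨i', hi', x, css_aux G hG.isAcyclic hm.2.symm hm.1 hx, rfl⟩
end

section
/- Finite-step exactness of consensus propagation on a tree: for every j ≥ 1 and every ordered pair (l,l') of adjacent vertices, m_j[l→l'] = Σ_{l'' ∈ C(l,l'), dist_G(l'', l) ≤ j−1} a[l'']. Consequently, for every j ≥ |𝓛|, m_j[l→l'] = Σ_{l''∈C(l,l')} a[l''] and a[l] + Σ_{l'∈N(l)} m_j[l'→l] = Σ_{l''∈𝓛} a[l''] for every vertex l; that is, consensus propagation on a tree reaches exact summation consensus at every node after finitely many inner iterations. -/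
open SimpleGraph

theorem cp_dist_lt_reach {W : Type*} (G : SimpleGraph W) (hG : G.IsTree) {x l l' : W}
    (h : G.dist x l < G.dist x l') : (G.deleteEdges {s(l, l')}).Reachable x l := by
  classical
  obtain ⟨p, hp⟩ := hG.1.exists_walk_length_eq_dist x l
  have hl : l' ∉ p.support := by
    intro hm
    have h1 := p.length_takeUntil_le hm
    have h2 := dist_le (p.takeUntil l' hm)
    omega
  refine ⟨p.toDeleteEdge s(l, l') ?_⟩
  intro he
  exact hl (p.snd_mem_support_of_mem_edges he)

theorem cp_reach_iff {W : Type*} (G : SimpleGraph W) (hG : G.IsTree) {x l l' : W}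
    (hadj : G.Adj l l') :
    (G.deleteEdges {s(l, l')}).Reachable x l ↔ G.dist x l < G.dist x l' := by
  refine ⟨fun h => ?_, cp_dist_lt_reach G hG⟩
  by_contra hlt
  have hne := hG.dist_ne_of_adj x hadj
  have h2 : G.dist x l' < G.dist x l := by omega
  have h3 := cp_dist_lt_reach G hG h2
  rw [Sym2.eq_swap] at h3
  have hb := (isAcyclic_iff_forall_adj_isBridge.1 hG.2) hadj
  rw [isBridge_iff] at hb
  exact hb (h.symm.trans h3)

theorem cp_unique {W : Type*} (G : SimpleGraph W) (hG : G.IsTree) {x l u w : W}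
    (hu : G.Adj l u) (hw : G.Adj l w) (h1 : G.dist x u < G.dist x l)
    (h2 : G.dist x w < G.dist x l) : u = w := by
  have d1 := hG.dist_eq_dist_add_one_of_adj x hu
  have d2 := hG.dist_eq_dist_add_one_of_adj x hw
  obtain ⟨p, hp⟩ := hG.1.exists_walk_length_eq_dist x u
  obtain ⟨q, hq⟩ := hG.1.exists_walk_length_eq_dist x w
  have hp' : (p.concat hu.symm).IsPath := by
    apply Walk.isPath_of_length_eq_dist
    rw [Walk.length_concat]; omega
  have hq' : (q.concat hw.symm).IsPath := by
    apply Walk.isPath_of_length_eq_dist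
    rw [Walk.length_concat]; omega
  have he := congrArg Subtype.val (hG.2.path_unique ⟨_, hp'⟩ ⟨_, hq'⟩)
  have := congrArg Walk.penultimate he
  simpa using this

theorem cp_exists {W : Type*} (G : SimpleGraph W) (hG : G.IsTree) {x l : W} (h : x ≠ l) :
    ∃ n, G.Adj l n ∧ G.dist x n < G.dist x l := by
  obtain ⟨p, hp⟩ := hG.1.exists_walk_length_eq_dist l x
  cases p with
  | nil => exact absurd rfl h
  | cons hadj q =>
    refine ⟨_, hadj, ?_⟩
    have := dist_le q
    rw [Walk.length_cons] at hp
    rw [dist_comm, G.dist_comm (u := x)]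
    omega

theorem cp_dist_lt_card {W : Type*} [Fintype W] (G : SimpleGraph W) (hG : G.IsTree) (x l : W) :
    G.dist x l < Fintype.card W := by
  obtain ⟨p, hp, hl⟩ := hG.1.exists_path_of_dist x l
  rw [← hl]
  exact hp.length_lt

open scoped Classical in
theorem cp_sum {W V : Type*} [Fintype W] [AddCommGroup V] (G : SimpleGraph W) (hG : G.IsTree)
    (a : W → V) (l : W) (S T : Finset W) (P : W → W → Prop)
    (hS : ∀ n ∈ S, G.Adj l n)
    (hT : ∀ x, x ∈ T ↔ x = l ∨ ∃ n ∈ S, G.dist x n < G.dist x l ∧ P x n) :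
    a l + ∑ n ∈ S, ∑ x ∈ Finset.univ.filter (fun x => G.dist x n < G.dist x l ∧ P x n), a x
      = ∑ x ∈ T, a x := by
  rw [← Finset.sum_biUnion, ← Finset.sum_insert]
  · apply Finset.sum_congr _ (fun _ _ => rfl)
    ext x
    simp [hT]
  · simp
  · intro u hu w hw hne
    rw [Function.onFun, Finset.disjoint_left]
    intro x hx hx'
    simp only [Finset.mem_filter, Finset.mem_univ, true_and] at hx hx'
    exact hne (cp_unique G hG (hS u hu) (hS w hw) hx.1 hx'.1)

open scoped Classical in
/-- Finite-step exactness of consensus propagation on a tree: for every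
`j ≥ 1` and ordered pair of adjacent vertices `(l, l')`,
`m_j[l→l'] = ∑_{l'' ∈ C(l,l'), dist(l'',l) ≤ j−1} a l''`.  Consequently, for every
`j ≥ |𝓛|`, `m_j[l→l'] = ∑_{l''∈C(l,l')} a l''` and every vertex recovers the total sum
`a l + ∑_{l'∈N(l)} m_j[l'→l] = ∑_{l''} a l''`. -/
theorem consensus_propagation_finite_step_exactness
    {𝓛 : Type*} [Fintype 𝓛] [DecidableEq 𝓛] (G : SimpleGraph 𝓛) [DecidableRel G.Adj]
    (hG : G.IsTree)
    {V : Type*} [AddCommGroup V] [Module ℝ V]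
    (a : 𝓛 → V)
    (m : ℕ → 𝓛 → 𝓛 → V)
    (hm0 : ∀ l l' : 𝓛, G.Adj l l' → m 0 l l' = 0)
    (hmstep : ∀ (j : ℕ) (l l' : 𝓛), G.Adj l l' →
      m (j + 1) l l' = a l + ∑ l'' ∈ (G.neighborFinset l).erase l', m j l'' l)
    (Cset : 𝓛 → 𝓛 → Finset 𝓛)
    (hC : ∀ l l' : 𝓛, Cset l l' =
      Finset.univ.filter fun x => (G.deleteEdges {s(l, l')}).Reachable x l) :
    (∀ j : ℕ, 1 ≤ j → ∀ l l' : 𝓛, G.Adj l l' →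
        m j l l' = ∑ l'' ∈ (Cset l l').filter (fun x => G.dist x l ≤ j - 1), a l'')
      ∧ (∀ j : ℕ, Fintype.card 𝓛 ≤ j → ∀ l l' : 𝓛, G.Adj l l' →
          m j l l' = ∑ l'' ∈ Cset l l', a l'')
      ∧ (∀ j : ℕ, Fintype.card 𝓛 ≤ j → ∀ l : 𝓛,
          (a l + ∑ l' ∈ G.neighborFinset l, m j l' l) = ∑ l'' : 𝓛, a l'') := by
  have key : ∀ j : ℕ, ∀ l l' : 𝓛, G.Adj l l' → m j l l' =
      ∑ x ∈ Finset.univ.filter (fun x => G.dist x l < G.dist x l' ∧ G.dist x l < j), a x := by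
    intro j
    induction j with
    | zero => intro l l' h; simp [hm0 l l' h]
    | succ j ih =>
      intro l l' h
      rw [hmstep j l l' h]
      rw [← cp_sum G hG a l ((G.neighborFinset l).erase l') _ (fun x n => G.dist x n < j)]
      · congr 1
        apply Finset.sum_congr rfl
        intro n hn
        have hn' : G.Adj l n := by simpa using Finset.mem_of_mem_erase hn
        convert ih n l hn'.symm
      · intro n hn
        simpa using Finset.mem_of_mem_erase hn
      · intro x
        simp only [Finset.mem_filter, Finset.mem_univ, true_and, Finset.mem_erase,
          mem_neighborFinset]
        constructor
        · rintro ⟨h1, h2⟩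
          by_cases hx : x = l
          · exact Or.inl hx
          · obtain ⟨n, hn, hlt⟩ := cp_exists G hG hx
            refine Or.inr ⟨n, ⟨?_, hn⟩, hlt, by omega⟩
            rintro rfl
            omega
        · rintro (rfl | ⟨n, ⟨hne, hn⟩, hlt, hj⟩)
          · rw [SimpleGraph.dist_self]
            exact ⟨hG.1.pos_dist_of_ne h.ne, by omega⟩
          · have d1 := hG.dist_eq_dist_add_one_of_adj x hn
            refine ⟨?_, by omega⟩
            by_contra hc
            have := hG.dist_ne_of_adj x h
            exact hne (cp_unique G hG hn h hlt (by omega))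
  have key2 : ∀ j : ℕ, Fintype.card 𝓛 ≤ j → ∀ l l' : 𝓛, G.Adj l l' →
      m j l l' = ∑ l'' ∈ Cset l l', a l'' := by
    intro j hj l l' h
    rw [key j l l' h, hC]
    apply Finset.sum_congr _ (fun _ _ => rfl)
    ext x
    have := cp_dist_lt_card G hG x l
    simp only [Finset.mem_filter, Finset.mem_univ, true_and, cp_reach_iff G hG h]
    omega
  refine ⟨?_, key2, ?_⟩
  · intro j hj l l' h
    rw [key j l l' h, hC]
    apply Finset.sum_congr _ (fun _ _ => rfl)
    ext x
    simp only [Finset.mem_filter, Finset.mem_univ, true_and, cp_reach_iff G hG h]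
    omega
  · intro j hj l
    rw [← cp_sum G hG a l (G.neighborFinset l) _ (fun x n => G.dist x n < j)]
    · congr 1
      apply Finset.sum_congr rfl
      intro n hn
      have hn' : G.Adj l n := by simpa using hn
      convert key j n l hn'.symm
    · intro n hn
      simpa using hn
    · intro x
      simp only [Finset.mem_univ, true_iff, mem_neighborFinset]
      by_cases hx : x = l
      · exact Or.inl hx
      · obtain ⟨n, hn, hlt⟩ := cp_exists G hG hx
        have := cp_dist_lt_card G hG x n
        exact Or.inr ⟨n, hn, hlt, by omega⟩
end
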